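/- For every integer α ≥ 1, the Laurent series L_{2α−1} (in the d_3 tower) satisfies L_{2α−1} = q^2 · (J_7^{10}/J_14^3) · ∑_{n≥0} d_3(7^{2α−1}·n + λ_{2α−1})·q^n, where λ_β = (5·7^β + 1)/6. -/

import Mathlib

noncomputable section

/-- `J b = ∏_{k=1}^∞ (1 - q^{b·k})` as a formal power series with integer coefficients. -/
def J (b : ℕ) : PowerSeries ℤ :=
  PowerSeries.mk fun n =>
    PowerSeries.coeff (R := ℤ) n
      (∏ k ∈ Finset.range (n + 1), (1 - (PowerSeries.X : PowerSeries ℤ) ^ (b * (k + 1))))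

/-- the U₇ operator on power series -/
def u7 (f : PowerSeries ℤ) : PowerSeries ℤ := PowerSeries.mk fun n => PowerSeries.coeff (7 * n) f

/-- substitution q ↦ q^7 -/
def ex7 : PowerSeries ℤ →ₐ[ℤ] PowerSeries ℤ := PowerSeries.expand 7 (by norm_num)

lemma ex7_coeff_mul (f : PowerSeries ℤ) (n : ℕ) :
    PowerSeries.coeff (7 * n) (ex7 f) = PowerSeries.coeff n f := by
  unfold ex7
  exact PowerSeries.coeff_expand_mul 7 (by norm_num) _ _

lemma ex7_coeff_ndvd (f : PowerSeries ℤ) (n : ℕ) (h : ¬ 7 ∣ n) :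
    PowerSeries.coeff n (ex7 f) = 0 := by
  unfold ex7
  exact PowerSeries.coeff_expand_of_not_dvd 7 (by norm_num) _ h

lemma u7_mul_ex7 (f g : PowerSeries ℤ) : u7 (ex7 g * f) = g * u7 f := by
  ext n
  simp only [u7, PowerSeries.coeff_mk, PowerSeries.coeff_mul]
  symm
  apply Finset.sum_of_injOn (fun p : ℕ × ℕ => (7 * p.1, 7 * p.2))
  · rintro ⟨a, b⟩ _ ⟨c, d⟩ _ h
    simp only [Prod.mk.injEq] at h ⊢
    omega
  · rintro ⟨a, b⟩ h
    simp only [Finset.mem_coe, Finset.HasAntidiagonal.mem_antidiagonal] at h ⊢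
    omega
  · rintro ⟨a, b⟩ h h2
    simp only [Finset.HasAntidiagonal.mem_antidiagonal] at h
    by_cases ha : 7 ∣ a
    · exfalso
      apply h2
      obtain ⟨c, rfl⟩ := ha
      refine ⟨(c, n - c), ?_, ?_⟩
      · simp only [Finset.mem_coe, Finset.HasAntidiagonal.mem_antidiagonal]; omega
      · have hb : 7 * (n - c) = b := by omega
        simp only [hb]
    · simp only [ex7_coeff_ndvd g a ha, zero_mul]
  · rintro ⟨a, b⟩ _
    simp only [ex7_coeff_mul]

lemma u7_shift (a c r : ℕ) (hr : r < 7) (h : 7 * c = a + r) (f : ℕ → ℤ) :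
    u7 (PowerSeries.X ^ a * PowerSeries.mk f)
      = PowerSeries.X ^ c * PowerSeries.mk fun n => f (7 * n + r) := by
  ext n
  simp only [u7, PowerSeries.coeff_mk, PowerSeries.coeff_X_pow_mul']
  by_cases hc : c ≤ n
  · rw [if_pos hc, if_pos (by omega)]
    congr 1; omega
  · rw [if_neg hc, if_neg (by omega)]

lemma U_of (U : LaurentSeries ℤ → LaurentSeries ℤ)
    (hU : ∀ (f : LaurentSeries ℤ) (n : ℤ), (U f).coeff n = f.coeff (7 * n))
    (f : PowerSeries ℤ) :
    U (HahnSeries.ofPowerSeries ℤ ℤ f) = HahnSeries.ofPowerSeries ℤ ℤ (u7 f) := by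
  ext n
  rw [hU, PowerSeries.coeff_coe, PowerSeries.coeff_coe]
  by_cases hn : n < 0
  · rw [if_pos hn, if_pos (by omega)]
  · rw [if_neg hn, if_neg (by omega), u7, PowerSeries.coeff_mk]
    congr 2; omega

lemma J_coeff (b : ℕ) (hb : 0 < b) (n N : ℕ) (h : n + 1 ≤ N) :
    PowerSeries.coeff n (∏ k ∈ Finset.range N,
      (1 - (PowerSeries.X : PowerSeries ℤ) ^ (b * (k + 1)))) = PowerSeries.coeff n (J b) := by
  induction N, h using Nat.le_induction with
  | base => rw [J, PowerSeries.coeff_mk]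
  | succ N hN ih =>
    rw [Finset.prod_range_succ, mul_sub, mul_one, map_sub, ih, mul_comm,
      PowerSeries.coeff_X_pow_mul', if_neg, sub_zero]
    have : N + 1 ≤ b * (N + 1) := Nat.le_mul_of_pos_left _ hb
    omega

lemma J_ex7 (b : ℕ) (hb : 0 < b) : ex7 (J b) = J (7 * b) := by
  ext n
  rw [← J_coeff (7 * b) (by omega) n (n + 1) le_rfl]
  have : (∏ k ∈ Finset.range (n + 1), (1 - (PowerSeries.X : PowerSeries ℤ) ^ (7 * b * (k + 1))))
    = ex7 (∏ k ∈ Finset.range (n + 1), (1 - (PowerSeries.X : PowerSeries ℤ) ^ (b * (k + 1)))) := by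
    rw [map_prod]
    refine Finset.prod_congr rfl fun k _ => ?_
    have hX : ex7 PowerSeries.X = PowerSeries.X ^ 7 := by
      unfold ex7; exact PowerSeries.expand_X 7 (by norm_num)
    rw [map_sub, map_one, map_pow, hX, ← pow_mul, mul_assoc]
  rw [this]
  by_cases h : 7 ∣ n
  · obtain ⟨m, rfl⟩ := h
    rw [ex7_coeff_mul, ex7_coeff_mul, J_coeff b hb m _ (by omega)]
  · rw [ex7_coeff_ndvd _ _ h, ex7_coeff_ndvd _ _ h]

lemma J_unit (b : ℕ) (hb : 0 < b) : ∃ K, J b * K = 1 := by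
  have : IsUnit (J b) := by
    rw [PowerSeries.isUnit_iff_constantCoeff, ← PowerSeries.coeff_zero_eq_constantCoeff_apply,
      ← J_coeff b hb 0 1 le_rfl]
    simp [hb.ne']
  exact this.exists_right_inv

/-- in the d₃ tower (`A₃ = q^8·J_2^3·J_49^{10}/(J_1^{10}·J_98^3)`, `L_0 = 1`,
`L_{2β+1} = U_7(A₃·L_{2β})`, `L_{2β+2} = U_7(L_{2β+1})`), for every `α ≥ 1`:
`L_{2α−1} = q^2·(J_7^{10}/J_14^3)·∑_{n≥0} d_3(7^{2α−1}·n + λ_{2α−1})·qⁿ`, with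
`λ_β = (5·7^β+1)/6`; stated multiplied through by the invertible series `J_14^3`. -/
theorem stmt9
    (d3 : ℕ → ℤ) (hd : PowerSeries.mk d3 * (J 1) ^ 10 = (J 2) ^ 3)
    (U : LaurentSeries ℤ → LaurentSeries ℤ)
    (hU : ∀ (f : LaurentSeries ℤ) (n : ℤ), (U f).coeff n = f.coeff (7 * n))
    (A3 : LaurentSeries ℤ)
    (hA3 : A3 * HahnSeries.ofPowerSeries ℤ ℤ ((J 1) ^ 10 * (J 98) ^ 3)
        = HahnSeries.ofPowerSeries ℤ ℤ (PowerSeries.X ^ 8 * (J 2) ^ 3 * (J 49) ^ 10))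
    (L : ℕ → LaurentSeries ℤ) (hL0 : L 0 = 1)
    (hLodd : ∀ β : ℕ, L (2 * β + 1) = U (A3 * L (2 * β)))
    (hLeven : ∀ β : ℕ, L (2 * β + 2) = U (L (2 * β + 1)))
    (α : ℕ) (hα : 1 ≤ α) :
    L (2 * α - 1) * HahnSeries.ofPowerSeries ℤ ℤ ((J 14) ^ 3)
      = HahnSeries.ofPowerSeries ℤ ℤ
          (PowerSeries.X ^ 2 * (J 7) ^ 10 *
            PowerSeries.mk fun n =>
              d3 (7 ^ (2 * α - 1) * n + (5 * 7 ^ (2 * α - 1) + 1) / 6)) := by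
  obtain ⟨K, hK⟩ := J_unit 2 (by norm_num)
  obtain ⟨M, hM⟩ := J_unit 1 (by norm_num)
  obtain ⟨R, hR⟩ : ∃ R : PowerSeries ℤ, R = J 1 ^ 10 * K ^ 3 := ⟨_, rfl⟩
  obtain ⟨D, hD⟩ : ∃ D : PowerSeries ℤ, D = PowerSeries.mk d3 := ⟨_, rfl⟩
  rw [← hD] at hd
  have e1 : ex7 (J 1) = J 7 := J_ex7 1 (by norm_num)
  have e2 : ex7 (J 2) = J 14 := J_ex7 2 (by norm_num)
  have e7 : ex7 (J 7) = J 49 := J_ex7 7 (by norm_num)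
  have e14 : ex7 (J 14) = J 98 := J_ex7 14 (by norm_num)
  have hK1 : J 14 * ex7 K = 1 := by rw [← e2, ← map_mul, hK, map_one]
  have hK2 : J 98 * ex7 (ex7 K) = 1 := by rw [← e14, ← map_mul, hK1, map_one]
  have hS : ex7 R = J 7 ^ 10 * ex7 K ^ 3 := by rw [hR, map_mul, map_pow, map_pow, e1]
  have hT : ex7 (ex7 R) = J 49 ^ 10 * ex7 (ex7 K) ^ 3 := by
    rw [hS, map_mul, map_pow, map_pow, e7]
  have hK3 : J 2 ^ 3 * K ^ 3 = 1 := by rw [← mul_pow, hK, one_pow]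
  have hM10 : J 1 ^ 10 * M ^ 10 = 1 := by rw [← mul_pow, hM, one_pow]
  have hK13 : J 14 ^ 3 * ex7 K ^ 3 = 1 := by rw [← mul_pow, hK1, one_pow]
  have hK23 : J 98 ^ 3 * ex7 (ex7 K) ^ 3 = 1 := by rw [← mul_pow, hK2, one_pow]
  have hDR : D * R = 1 := by rw [hR, ← mul_assoc, hd, hK3]
  have hA : A3 = HahnSeries.ofPowerSeries ℤ ℤ (ex7 (ex7 R) * (PowerSeries.X ^ 8 * D)) := by
    have h1 : (J 1 ^ 10 * J 98 ^ 3) * (M ^ 10 * ex7 (ex7 K) ^ 3) = 1 := by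
      rw [mul_mul_mul_comm, hM10, hK23, one_mul]
    calc A3 = A3 * HahnSeries.ofPowerSeries ℤ ℤ
          ((J 1 ^ 10 * J 98 ^ 3) * (M ^ 10 * ex7 (ex7 K) ^ 3)) := by
            rw [h1, map_one, mul_one]
      _ = _ := by
        rw [map_mul, ← mul_assoc, hA3, ← map_mul, ← hd, hT]
        refine congrArg _ ?_
        linear_combination (PowerSeries.X ^ 8 * D * J 49 ^ 10 * ex7 (ex7 K) ^ 3) * hM10
  have key : ∀ β : ℕ, L (2 * β + 1) = HahnSeries.ofPowerSeries ℤ ℤ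
      (ex7 R * (PowerSeries.X ^ 2 * PowerSeries.mk fun n =>
        d3 (7 ^ (2 * β + 1) * n + (5 * 7 ^ (2 * β + 1) + 1) / 6))) := by
    intro β
    induction β with
    | zero =>
      rw [hLodd 0, mul_zero, hL0, mul_one, hA, U_of U hU, u7_mul_ex7, hD,
        u7_shift 8 2 6 (by norm_num) (by norm_num)]
      norm_num
    | succ β ih =>
      have h2 : L (2 * (β + 1)) = HahnSeries.ofPowerSeries ℤ ℤ
          (R * (PowerSeries.X ^ 1 * PowerSeries.mk fun n =>
            d3 (7 ^ (2 * β + 2) * n + (5 * 7 ^ (2 * β + 2) + 1) / 6))) := by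
        rw [show 2 * (β + 1) = 2 * β + 2 by ring, hLeven, ih, U_of U hU, u7_mul_ex7,
          u7_shift 2 1 5 (by norm_num) (by norm_num)]
        refine congrArg _ (congrArg _ (congrArg _ (congrArg _ (funext fun n => congrArg d3 ?_))))
        have h3 : 7 ^ (2 * β + 2) = 7 * 7 ^ (2 * β + 1) := by rw [pow_succ]; ring
        have h4 : 7 * 7 ^ (2 * β + 1) * n = 7 ^ (2 * β + 1) * (7 * n) := by ring
        rw [h3, h4, mul_add]
        omega
      rw [hLodd, h2, hA, ← map_mul, U_of U hU]
      have h5 : ∀ E : PowerSeries ℤ, ex7 (ex7 R) * (PowerSeries.X ^ 8 * D) *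
          (R * (PowerSeries.X ^ 1 * E)) = ex7 (ex7 R) * (PowerSeries.X ^ 9 * E) := by
        intro E
        linear_combination (ex7 (ex7 R) * PowerSeries.X ^ 9 * E) * hDR
      rw [h5, u7_mul_ex7, u7_shift 9 2 5 (by norm_num) (by norm_num)]
      refine congrArg _ (congrArg _ (congrArg _ (congrArg _ (funext fun n => congrArg d3 ?_))))
      have h3 : 7 ^ (2 * (β + 1) + 1) = 7 * 7 ^ (2 * β + 2) := by
        rw [show 2 * (β + 1) + 1 = 2 * β + 2 + 1 by ring, pow_succ]; ring
      have h4 : 7 * 7 ^ (2 * β + 2) * n = 7 ^ (2 * β + 2) * (7 * n) := by ring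
      rw [h3, h4, mul_add]
      omega
  obtain ⟨β, rfl⟩ : ∃ β, α = β + 1 := ⟨α - 1, by omega⟩
  rw [show 2 * (β + 1) - 1 = 2 * β + 1 by omega, key β, ← map_mul, hS]
  refine congrArg _ ?_
  generalize (PowerSeries.mk fun n =>
        d3 (7 ^ (2 * β + 1) * n + (5 * 7 ^ (2 * β + 1) + 1) / 6)) = E
  linear_combination (PowerSeries.X ^ 2 * J 7 ^ 10 * E) * hK13
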